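/- arXiv:2206.14159 — 3 statements merged into one kernel-verified Lean document; each statement's English description precedes it below -/
import Mathlib

section
/- Let A and B be the companion matrices of f(x) = (x-1)^6 and g(x) = (x+1)^6 respectively, regarded as elements of GL(6,ℤ). Then the elements t = A⁻¹B and r = A⁻¹BA both have infinite order, the subgroup of GL(6,ℤ) generated by A and B equals the subgroup generated by t and r, and this group is the internal free product of the cyclic subgroups ⟨t⟩ and ⟨r⟩; in particular, the hypergeometric group Γ(α,β) with α = (0,0,0,0,0,0) and β = (1/2,1/2,1/2,1/2,1/2,1/2) is isomorphic to ℤ * ℤ, a free group of rank 2. -/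
open Matrix

/-- The companion matrix of `f(x) = (x-1)^6 = x^6 - 6x^5 + 15x^4 - 20x^3 + 15x^2 - 6x + 1`. -/
def companionF : Matrix (Fin 6) (Fin 6) ℤ :=
  !![0,0,0,0,0,-1; 1,0,0,0,0,6; 0,1,0,0,0,-15; 0,0,1,0,0,20; 0,0,0,1,0,-15; 0,0,0,0,1,6]

/-- The companion matrix of `g(x) = (x+1)^6 = x^6 + 6x^5 + 15x^4 + 20x^3 + 15x^2 + 6x + 1`. -/
def companionG : Matrix (Fin 6) (Fin 6) ℤ :=
  !![0,0,0,0,0,-1; 1,0,0,0,0,-6; 0,1,0,0,0,-15; 0,0,1,0,0,-20; 0,0,0,1,0,-15; 0,0,0,0,1,-6]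

/-! ### Model of the group in a basis where ping-pong is transparent -/

namespace HypFree

/-- The open positive cone. -/
def Cone (y : Fin 6 → ℤ) : Prop :=
  0 < y 0 ∧ 0 < y 1 ∧ 0 < y 2 ∧ 0 < y 3 ∧ 0 < y 4 ∧ 0 < y 5

/-- The invariant functional. -/
def phi (y : Fin 6 → ℤ) : ℤ := y 0 + y 1 + y 2 + y 3 + y 4 + y 5

/-- The direction of the transvection. -/
def pvec : Fin 6 → ℤ := ![-2, 2, -2, 2, -2, 2]

/-- The matrix of the transvection. -/
def Tmat : Matrix (Fin 6) (Fin 6) ℤ :=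
  !![-1,-2,-2,-2,-2,-2; 2,3,2,2,2,2; -2,-2,-1,-2,-2,-2; 2,2,2,3,2,2; -2,-2,-2,-2,-1,-2;
    2,2,2,2,2,3]

/-- The inverse of the transvection. -/
def Tinv : Matrix (Fin 6) (Fin 6) ℤ :=
  !![3,2,2,2,2,2; -2,-1,-2,-2,-2,-2; 2,2,3,2,2,2; -2,-2,-2,-1,-2,-2; 2,2,2,2,3,2;
    -2,-2,-2,-2,-2,-1]

/-- The model of `B`. -/
def Bmat : Matrix (Fin 6) (Fin 6) ℤ :=
  !![-1,-2,-2,-2,-2,-2; 0,-1,-2,-2,-2,-2; 0,0,-1,-2,-2,-2; 0,0,0,-1,-2,-2; 0,0,0,0,-1,-2;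
    0,0,0,0,0,-1]

/-- The inverse of the model of `B`. -/
def Binv : Matrix (Fin 6) (Fin 6) ℤ :=
  !![-1,2,-2,2,-2,2; 0,-1,2,-2,2,-2; 0,0,-1,2,-2,2; 0,0,0,-1,2,-2; 0,0,0,0,-1,2;
    0,0,0,0,0,-1]

/-- The involution inverting both generators. -/
def Smat : Matrix (Fin 6) (Fin 6) ℤ :=
  !![1,2,2,2,2,2; 0,-1,-2,-2,-2,-2; 0,0,1,2,2,2; 0,0,0,-1,-2,-2; 0,0,0,0,1,2; 0,0,0,0,0,-1]

/-- The model of `t` as a unit. -/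
def T : GL (Fin 6) ℤ := ⟨Tmat, Tinv, by decide +kernel, by decide +kernel⟩

/-- The model of `B` as a unit. -/
def B : GL (Fin 6) ℤ := ⟨Bmat, Binv, by decide +kernel, by decide +kernel⟩

/-- The involution as a unit. -/
def S : GL (Fin 6) ℤ := ⟨Smat, Smat, by decide +kernel, by decide +kernel⟩

lemma act_def (g : GL (Fin 6) ℤ) (x : Fin 6 → ℤ) :
    g • x = (g : Matrix (Fin 6) (Fin 6) ℤ).mulVec x := rfl

lemma act_neg (g : GL (Fin 6) ℤ) (x : Fin 6 → ℤ) : g • (-x) = -(g • x) := by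
  exact smul_neg g x

lemma T_act (y : Fin 6 → ℤ) : T • y = y + phi y • pvec := by
  rw [act_def]
  ext i
  fin_cases i <;> simp [T, Tmat, phi, pvec, Matrix.mulVec, dotProduct, Fin.sum_univ_succ] <;> ring

lemma phi_T (y : Fin 6 → ℤ) (m : ℤ) : phi (y + m • pvec) = phi y := by
  simp [phi, pvec]; ring

lemma T_pow_act (y : Fin 6 → ℤ) (m : ℤ) : T ^ m • y = y + (m * phi y) • pvec := by
  induction m using Int.induction_on generalizing y with
  | zero => simp
  | succ k ih =>
    rw [_root_.zpow_add_one, mul_smul, ih, T_act, phi_T]; module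
  | pred k ih =>
    have h : T⁻¹ • y = y + (-phi y) • pvec := by
      rw [inv_smul_eq_iff, T_act, phi_T]; module
    rw [_root_.zpow_sub_one, mul_smul, ih, h, phi_T]; module

lemma B_act (y : Fin 6 → ℤ) : B • y = -![y 0 + 2 * (y 1 + y 2 + y 3 + y 4 + y 5),
    y 1 + 2 * (y 2 + y 3 + y 4 + y 5), y 2 + 2 * (y 3 + y 4 + y 5), y 3 + 2 * (y 4 + y 5),
    y 4 + 2 * y 5, y 5] := by
  rw [act_def]
  ext i
  fin_cases i <;> simp [B, Bmat, Matrix.mulVec, dotProduct, Fin.sum_univ_succ] <;> ring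

lemma S_act (y : Fin 6 → ℤ) : S • y = ![y 0 + 2 * (y 1 + y 2 + y 3 + y 4 + y 5),
    -(y 1 + 2 * (y 2 + y 3 + y 4 + y 5)), y 2 + 2 * (y 3 + y 4 + y 5), -(y 3 + 2 * (y 4 + y 5)),
    y 4 + 2 * y 5, -y 5] := by
  rw [act_def]
  ext i
  fin_cases i <;> simp [S, Smat, Matrix.mulVec, dotProduct, Fin.sum_univ_succ] <;> ring

lemma S_S (y : Fin 6 → ℤ) : S • S • y = y := by
  have h : S * S = 1 := Units.ext (by decide +kernel)
  rw [← mul_smul, h, one_smul]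

lemma S_B_pow (k : ℤ) (y : Fin 6 → ℤ) : S • B ^ k • y = B ^ (-k) • S • y := by
  have h : SemiconjBy S B B⁻¹ := Units.ext (by decide +kernel)
  have h2 := h.zpow_right k
  rw [← mul_smul, ← mul_smul, h2.eq, _root_.inv_zpow']

lemma phi_S (y : Fin 6 → ℤ) : phi (S • y) = phi y := by
  rw [S_act]; simp [phi]; ring

lemma S_T (y : Fin 6 → ℤ) (q : ℤ) : S • (y + q • pvec) = S • y + (-q) • pvec := by
  rw [S_act, S_act]
  ext i
  fin_cases i <;> simp [pvec] <;> ring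

/-- `Cone` up to sign. -/
def PC (y : Fin 6 → ℤ) : Prop := Cone y ∨ Cone (-y)

/-- The first ping-pong set. -/
def X (y : Fin 6 → ℤ) : Prop := PC y ∨ PC (S • y)

lemma PC_neg {y : Fin 6 → ℤ} : PC (-y) ↔ PC y := by
  unfold PC; rw [neg_neg]; exact or_comm

lemma X_neg {y : Fin 6 → ℤ} : X (-y) ↔ X y := by
  unfold X; rw [act_neg, PC_neg, PC_neg]

lemma X_S {y : Fin 6 → ℤ} : X (S • y) ↔ X y := by
  unfold X; rw [S_S]; exact or_comm

lemma PC_B {y : Fin 6 → ℤ} (h : PC y) : PC (B • y) := by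
  rw [B_act, PC_neg]
  rcases h with h | h
  · left
    simp [Cone] at h ⊢
    omega
  · right
    simp [Cone] at h ⊢
    omega

lemma PC_B_pow {y : Fin 6 → ℤ} (h : PC (B • y)) (k : ℕ) : PC (B ^ ((k : ℤ) + 1) • y) := by
  induction k with
  | zero => simpa using h
  | succ k ih =>
    have : B ^ (((k + 1 : ℕ) : ℤ) + 1) • y = B • B ^ ((k : ℤ) + 1) • y := by
      rw [← mul_smul, ← _root_.zpow_one_add]; congr 2; push_cast; ring
    rw [this]
    exact PC_B ih

/-- Core estimate. -/
lemma core {y : Fin 6 → ℤ} (h : Cone y) {q : ℤ} (hq : phi y ≤ q ∨ q ≤ -phi y) :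
    PC (B • (y + q • pvec)) ∧ PC (B • (S • y + q • pvec)) := by
  rw [B_act, PC_neg, B_act, PC_neg, S_act]
  rcases hq with hq | hq
  · constructor <;> left <;> simp [Cone, phi, pvec] at h hq ⊢ <;> omega
  · constructor <;> right <;> simp [Cone, phi, pvec] at h hq ⊢ <;> omega

lemma phi_pos {y : Fin 6 → ℤ} (h : Cone y) : 0 < phi y := by
  unfold Cone at h; unfold phi; omega

lemma q_bound {y : Fin 6 → ℤ} (h : Cone y) {m : ℤ} (hm : m ≠ 0) :
    phi y ≤ m * phi y ∨ m * phi y ≤ -phi y := by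
  have := phi_pos h
  rcases lt_or_gt_of_ne hm with h1 | h1
  · right; nlinarith
  · left; nlinarith

lemma T_neg (y : Fin 6 → ℤ) (m : ℤ) :
    -y + (m * phi (-y)) • pvec = -(y + (m * phi y) • pvec) := by
  have : phi (-y) = - phi y := by simp [phi]; ring
  rw [this]; module

/-- Reduction to positive representatives. -/
lemma X_ind {P : (Fin 6 → ℤ) → Prop} (hneg : ∀ y, P (-y) → P y) (h1 : ∀ y, Cone y → P y)
    (h2 : ∀ y, Cone y → P (S • y)) {y : Fin 6 → ℤ} (h : X y) : P y := by
  rcases h with (h | h) | (h | h)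
  · exact h1 _ h
  · exact hneg _ (h1 _ h)
  · have := h2 _ h
    rwa [S_S] at this
  · have := h2 _ h
    rw [act_neg, S_S] at this
    exact hneg _ this

lemma step_one {y : Fin 6 → ℤ} (h : X y) {m : ℤ} (hm : m ≠ 0) :
    PC (B • (y + (m * phi y) • pvec)) := by
  refine X_ind (P := fun y => PC (B • (y + (m * phi y) • pvec))) ?_ ?_ ?_ h
  · intro y hy
    rwa [T_neg, act_neg, PC_neg] at hy
  · intro y hy
    exact (core hy (q_bound hy hm)).1
  · intro y hy
    rw [phi_S]
    exact (core hy (q_bound hy hm)).2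

lemma step_nat {y : Fin 6 → ℤ} (h : X y) {m : ℤ} (hm : m ≠ 0) (k : ℕ) :
    X (B ^ ((k : ℤ) + 1) • (y + (m * phi y) • pvec)) :=
  Or.inl (PC_B_pow (step_one h hm) k)

lemma step {y : Fin 6 → ℤ} (h : X y) {m k : ℤ} (hm : m ≠ 0) (hk : k ≠ 0) :
    X (B ^ k • T ^ m • y) := by
  rw [T_pow_act]
  rcases lt_or_gt_of_ne hk with h1 | h1
  · rw [← X_S, S_B_pow, S_T]
    obtain ⟨n, hn⟩ : ∃ n : ℕ, -k = (n : ℤ) + 1 := ⟨(-k - 1).toNat, by omega⟩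
    have := step_nat (X_S.2 h) (neg_ne_zero.2 hm) n
    rw [phi_S] at this
    rwa [hn, ← neg_mul]
  · obtain ⟨n, hn⟩ : ∃ n : ℕ, k = (n : ℤ) + 1 := ⟨(k - 1).toNat, by omega⟩
    rw [hn]
    exact step_nat h hm n

lemma disj_core {y : Fin 6 → ℤ} (h : Cone y) {q : ℤ} (hq : phi y ≤ q ∨ q ≤ -phi y) :
    ¬ PC (y + q • pvec) ∧ ¬ PC (S • y + q • pvec) := by
  have e : pvec = ![-2, 2, -2, 2, -2, 2] := rfl
  rw [S_act]
  rcases hq with hq | hq <;> constructor <;> rintro (h1 | h1) <;>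
    simp only [Cone, phi, e, Pi.add_apply, Pi.neg_apply, Pi.smul_apply, smul_eq_mul,
      Matrix.cons_val] at h hq h1 <;> omega

lemma disj {y : Fin 6 → ℤ} (h : X y) {m : ℤ} (hm : m ≠ 0) : ¬ X (T ^ m • y) := by
  rw [T_pow_act]
  refine X_ind (P := fun y => ¬ X (y + (m * phi y) • pvec)) ?_ ?_ ?_ h
  · intro y hy
    rwa [T_neg, X_neg] at hy
  · rintro y hy (h1 | h1)
    · exact (disj_core hy (q_bound hy hm)).1 h1
    · rw [S_T, ← neg_mul] at h1
      exact (disj_core hy (q_bound hy (neg_ne_zero.2 hm))).2 h1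
  · rintro y hy (h1 | h1)
    · rw [phi_S] at h1
      exact (disj_core hy (q_bound hy hm)).2 h1
    · rw [phi_S, S_T, S_S, ← neg_mul] at h1
      exact (disj_core hy (q_bound hy (neg_ne_zero.2 hm))).1 h1

lemma X_p {k : ℤ} (hk : k ≠ 0) : X (B ^ k • pvec) := by
  have h0 : PC (B • pvec) := by
    rw [B_act, PC_neg]; left; simp [Cone, pvec]
  have hS : S • pvec = -pvec := by
    rw [S_act]; ext i; fin_cases i <;> simp [pvec]
  rcases lt_or_gt_of_ne hk with h1 | h1
  · obtain ⟨n, hn⟩ : ∃ n : ℕ, -k = (n : ℤ) + 1 := ⟨(-k - 1).toNat, by omega⟩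
    rw [← X_S, S_B_pow, hn, hS, act_neg, X_neg]
    exact Or.inl (PC_B_pow h0 n)
  · obtain ⟨n, hn⟩ : ∃ n : ℕ, k = (n : ℤ) + 1 := ⟨(k - 1).toNat, by omega⟩
    rw [hn]
    exact Or.inl (PC_B_pow h0 n)

lemma not_X_p : ¬ X pvec := by
  unfold X PC
  rw [S_act]
  simp [Cone, pvec]

/-- The ping-pong sets. -/
def PP : Fin 2 → Set (Fin 6 → ℤ) :=
  ![{y | ¬ X y ∧ ∀ k : ℤ, k ≠ 0 → X (B ^ k • y)}, {y | X y}]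

open scoped Pointwise in
lemma model_free : Function.Injective (FreeGroup.lift ![T, B]) := by
  have : FreeGroup.lift ![T, B] =
      (Monoid.CoprodI.lift fun i => FreeGroup.lift fun _ => ![T, B] i).comp
        (@freeGroupEquivCoprodI (Fin 2)).toMonoidHom := by
    ext i
    simp
  rw [this, MonoidHom.coe_comp]
  clear this
  refine Function.Injective.comp ?_ (MulEquiv.injective freeGroupEquivCoprodI)
  let H : Fin 2 → Type _ := fun _i => FreeGroup Unit
  let f : ∀ i, H i →* GL (Fin 6) ℤ := fun i => FreeGroup.lift fun _ => ![T, B] i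
  change Function.Injective (Monoid.CoprodI.lift f)
  apply Monoid.CoprodI.lift_injective_of_ping_pong f _ PP
  · intro i
    fin_cases i
    · exact ⟨pvec, not_X_p, fun k hk => X_p hk⟩
    · exact ⟨_, X_p one_ne_zero⟩
  · have h01 : Disjoint (PP 0) (PP 1) := by
      rw [Set.disjoint_left]
      rintro y ⟨h1, -⟩ h2
      exact h1 h2
    intro i j hij
    fin_cases i <;> fin_cases j
    · exact absurd rfl hij
    · exact h01
    · exact h01.symm
    · exact absurd rfl hij
  · intro i j hij
    refine FreeGroup.freeGroupUnitEquivInt.forall_congr_left.mpr ?_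
    intro n hne1
    change FreeGroup.lift (fun _ => ![T, B] i) (FreeGroup.of () ^ n) • PP j ⊆ PP i
    simp only [map_zpow, FreeGroup.lift_apply_of]
    have hn : n ≠ 0 := by
      rintro rfl
      apply hne1
      simp [H, FreeGroup.freeGroupUnitEquivInt]
    rintro _ ⟨y, hy, rfl⟩
    fin_cases i <;> fin_cases j
    · exact absurd rfl hij
    · exact ⟨disj hy hn, fun k hk => step hy hn hk⟩
    · exact hy.2 n hn
    · exact absurd rfl hij
  · right
    refine ⟨0, ?_⟩
    have : Infinite (FreeGroup Unit) := FreeGroup.freeGroupUnitEquivInt.infinite_iff.2 inferInstance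
    exact (Cardinal.natCast_lt_aleph0 (n := 3)).le.trans (Cardinal.infinite_iff.1 this)

/-- Change of basis. -/
def Nmat : Matrix (Fin 6) (Fin 6) ℤ :=
  !![1,-1,1,-1,1,-1; 5,-3,1,1,-3,5; 10,-2,-2,2,2,-10; 10,2,-2,-2,2,10; 5,3,1,-1,-3,-5;
    1,1,1,1,1,1]

/-- 32 times the inverse of `Nmat`. -/
def Mmat : Matrix (Fin 6) (Fin 6) ℤ :=
  !![1,1,1,1,1,1; -5,-3,-1,1,3,5; 10,2,-2,-2,2,10; -10,2,2,-2,-2,10; 5,-3,1,1,-3,5;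
    -1,1,-1,1,-1,1]

lemma intertwine (t b : GL (Fin 6) ℤ)
    (ht : (t : Matrix (Fin 6) (Fin 6) ℤ) * Nmat = Nmat * Tmat)
    (hb : (b : Matrix (Fin 6) (Fin 6) ℤ) * Nmat = Nmat * Bmat) (w : FreeGroup (Fin 2)) :
    ((FreeGroup.lift ![t, b] w : GL (Fin 6) ℤ) : Matrix (Fin 6) (Fin 6) ℤ) * Nmat =
      Nmat * ((FreeGroup.lift ![T, B] w : GL (Fin 6) ℤ) : Matrix (Fin 6) (Fin 6) ℤ) := by
  have key : ∀ i, (((![t, b] i) : GL (Fin 6) ℤ) : Matrix (Fin 6) (Fin 6) ℤ) * Nmat =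
      Nmat * (((![T, B] i) : GL (Fin 6) ℤ) : Matrix (Fin 6) (Fin 6) ℤ) := by
    intro i
    fin_cases i
    · exact ht
    · exact hb
  induction w using FreeGroup.induction_on with
  | C1 => simp
  | of i => simpa using key i
  | inv_of i _ =>
    have : SemiconjBy Nmat (((![T, B] i) : GL (Fin 6) ℤ) : Matrix (Fin 6) (Fin 6) ℤ)
      (((![t, b] i) : GL (Fin 6) ℤ) : Matrix (Fin 6) (Fin 6) ℤ) := (key i).symm
    have h2 := this.units_inv_right
    simp only [map_inv, FreeGroup.lift_apply_of]
    exact h2.eq.symm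
  | mul x y hx hy =>
    rw [map_mul, map_mul, Units.val_mul, Units.val_mul, Matrix.mul_assoc, hy, ← Matrix.mul_assoc,
      hx, Matrix.mul_assoc]

lemma free_of_intertwine (t b : GL (Fin 6) ℤ)
    (ht : (t : Matrix (Fin 6) (Fin 6) ℤ) * Nmat = Nmat * Tmat)
    (hb : (b : Matrix (Fin 6) (Fin 6) ℤ) * Nmat = Nmat * Bmat) :
    Function.Injective (FreeGroup.lift ![t, b]) := by
  rw [injective_iff_map_eq_one]
  intro w hw
  apply (injective_iff_map_eq_one _).1 model_free w
  have h := intertwine t b ht hb w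
  rw [hw] at h
  have hM : Mmat * Nmat = (32 : ℤ) • (1 : Matrix (Fin 6) (Fin 6) ℤ) := by decide +kernel
  have h2 := congrArg (fun Z => Mmat * Z) h
  simp only [Units.val_one, Matrix.one_mul, ← Matrix.mul_assoc, hM, Matrix.smul_mul] at h2
  apply Units.ext
  exact (smul_right_injective _ (by norm_num : (32 : ℤ) ≠ 0) h2).symm

/-- Consequences of freeness, for abstract groups. -/
lemma coprod_injective {G : Type*} [Group G] (t r : G)
    (h : Function.Injective (FreeGroup.lift ![t, r])) :
    Function.Injective
      (Monoid.Coprod.lift (Subgroup.zpowers t).subtype (Subgroup.zpowers r).subtype) := by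
  let ψ : FreeGroup (Fin 2) →* Monoid.Coprod (Subgroup.zpowers t) (Subgroup.zpowers r) :=
    FreeGroup.lift ![Monoid.Coprod.inl ⟨t, Subgroup.mem_zpowers t⟩,
      Monoid.Coprod.inr ⟨r, Subgroup.mem_zpowers r⟩]
  have hcomp : (Monoid.Coprod.lift (Subgroup.zpowers t).subtype
      (Subgroup.zpowers r).subtype).comp ψ = FreeGroup.lift ![t, r] := by
    ext i
    fin_cases i <;> simp [ψ]
  have hsurj : Function.Surjective ψ := by
    rw [← MonoidHom.range_eq_top, eq_top_iff, ← Monoid.Coprod.range_inl_sup_range_inr, sup_le_iff]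
    constructor
    · rintro _ ⟨⟨_, k, rfl⟩, rfl⟩
      refine ⟨FreeGroup.of 0 ^ k, ?_⟩
      rw [map_zpow]
      simp only [ψ, FreeGroup.lift_apply_of, Matrix.cons_val_zero]
      rw [← map_zpow]
      rfl
    · rintro _ ⟨⟨_, k, rfl⟩, rfl⟩
      refine ⟨FreeGroup.of 1 ^ k, ?_⟩
      rw [map_zpow]
      simp only [ψ, FreeGroup.lift_apply_of]
      exact (map_zpow (Monoid.Coprod.inr : _ →* Monoid.Coprod (Subgroup.zpowers t)
        (Subgroup.zpowers r)) ⟨r, Subgroup.mem_zpowers r⟩ k).symm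
  rw [← hcomp, MonoidHom.coe_comp] at h
  exact Function.Injective.of_comp_right h hsurj

lemma not_finOrder {G : Type*} [Group G] (a : Fin 2 → G)
    (h : Function.Injective (FreeGroup.lift a)) (i : Fin 2) : ¬ IsOfFinOrder (a i) := by
  have h2 : FreeGroup.lift a (FreeGroup.of i) = a i := by simp
  rw [← h2, h.isOfFinOrder_iff]
  exact not_isOfFinOrder_of_isMulTorsionFree (FreeGroup.of_ne_one i)

end HypFree

/-- The hypergeometric group with `α = (0,0,0,0,0,0)`, `β = (1/2,1/2,1/2,1/2,1/2,1/2)` is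
free of rank two: `t = A⁻¹B` and `r = A⁻¹BA` have infinite order, generate the group
generated by `A` and `B`, and the group is the internal free product of `⟨t⟩` and `⟨r⟩`;
in particular it is isomorphic to `ℤ * ℤ`, the free group of rank `2`. -/
theorem hypergeometric_free_of_rank_two
    (A B : GL (Fin 6) ℤ)
    (hA : (A : Matrix (Fin 6) (Fin 6) ℤ) = companionF)
    (hB : (B : Matrix (Fin 6) (Fin 6) ℤ) = companionG) :
    ¬ IsOfFinOrder (A⁻¹ * B) ∧ ¬ IsOfFinOrder (A⁻¹ * B * A) ∧
    Subgroup.closure {A, B} = Subgroup.closure {A⁻¹ * B, A⁻¹ * B * A} ∧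
    Function.Injective
      (Monoid.Coprod.lift (Subgroup.zpowers (A⁻¹ * B)).subtype
        (Subgroup.zpowers (A⁻¹ * B * A)).subtype) ∧
    (Monoid.Coprod.lift (Subgroup.zpowers (A⁻¹ * B)).subtype
        (Subgroup.zpowers (A⁻¹ * B * A)).subtype).range = Subgroup.closure {A, B} ∧
    Nonempty ((Subgroup.closure {A, B} : Subgroup (GL (Fin 6) ℤ)) ≃* FreeGroup (Fin 2)) := by
  have hAt : A * (A⁻¹ * B) = B := by group
  have hr : A⁻¹ * B * A = (A⁻¹ * B) * B * (A⁻¹ * B)⁻¹ := by group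
  have ht : ((A⁻¹ * B : GL (Fin 6) ℤ) : Matrix (Fin 6) (Fin 6) ℤ) * HypFree.Nmat =
      HypFree.Nmat * HypFree.Tmat := by
    have h1 : (A : Matrix (Fin 6) (Fin 6) ℤ) * (HypFree.Nmat * HypFree.Tmat) =
        (B : Matrix (Fin 6) (Fin 6) ℤ) * HypFree.Nmat := by
      rw [hA, hB]; decide +kernel
    rw [Units.val_mul, Matrix.mul_assoc, ← h1, ← Matrix.mul_assoc, ← Units.val_mul,
      inv_mul_cancel, Units.val_one, Matrix.one_mul]
  have hb : (B : Matrix (Fin 6) (Fin 6) ℤ) * HypFree.Nmat = HypFree.Nmat * HypFree.Bmat := by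
    rw [hB]; decide +kernel
  have h0 := HypFree.free_of_intertwine _ _ ht hb
  have hfree : Function.Injective (FreeGroup.lift ![A⁻¹ * B, A⁻¹ * B * A]) := by
    have : FreeGroup.lift ![A⁻¹ * B, A⁻¹ * B * A] =
        (MulAut.conj (A⁻¹ * B)).toMonoidHom.comp (FreeGroup.lift ![A⁻¹ * B, B]) := by
      apply FreeGroup.ext_hom
      intro i
      fin_cases i
      · simp only [MonoidHom.comp_apply, FreeGroup.lift_apply_of]
        change A⁻¹ * B = (A⁻¹ * B) * (A⁻¹ * B) * (A⁻¹ * B)⁻¹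
        group
      · simp only [MonoidHom.comp_apply, FreeGroup.lift_apply_of]
        exact hr
    rw [this, MonoidHom.coe_comp]
    exact (MulAut.conj (A⁻¹ * B)).injective.comp h0
  have hcl : Subgroup.closure {A, B} = Subgroup.closure {A⁻¹ * B, A⁻¹ * B * A} := by
    apply le_antisymm
    · rw [Subgroup.closure_le]
      have m1 : A⁻¹ * B ∈ Subgroup.closure {A⁻¹ * B, A⁻¹ * B * A} :=
        Subgroup.subset_closure (by simp)
      have m2 : A⁻¹ * B * A ∈ Subgroup.closure {A⁻¹ * B, A⁻¹ * B * A} :=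
        Subgroup.subset_closure (by simp)
      have m3 : A ∈ Subgroup.closure {A⁻¹ * B, A⁻¹ * B * A} := by
        have := mul_mem (inv_mem m1) m2
        rwa [inv_mul_cancel_left] at this
      have m4 : B ∈ Subgroup.closure {A⁻¹ * B, A⁻¹ * B * A} := by
        have := mul_mem m3 m1
        rwa [hAt] at this
      rintro x (rfl | rfl)
      · exact m3
      · exact m4
    · rw [Subgroup.closure_le]
      have m1 : A ∈ Subgroup.closure {A, B} := Subgroup.subset_closure (by simp)
      have m2 : B ∈ Subgroup.closure {A, B} := Subgroup.subset_closure (by simp)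
      rintro x (rfl | rfl)
      · exact mul_mem (inv_mem m1) m2
      · exact mul_mem (mul_mem (inv_mem m1) m2) m1
  refine ⟨HypFree.not_finOrder _ hfree 0, HypFree.not_finOrder _ hfree 1, hcl,
    HypFree.coprod_injective _ _ hfree, ?_, ?_⟩
  · rw [hcl, Monoid.Coprod.range_lift, Subgroup.range_subtype, Subgroup.range_subtype,
      Subgroup.zpowers_eq_closure, Subgroup.zpowers_eq_closure, ← Subgroup.closure_union]
    rfl
  · have hrange : (FreeGroup.lift ![A⁻¹ * B, A⁻¹ * B * A]).range = Subgroup.closure {A, B} := by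
      rw [FreeGroup.range_lift_eq_closure, hcl]
      simp [Matrix.range_cons, Matrix.range_empty, Set.pair_comm]
    rw [← hrange]
    exact ⟨(MonoidHom.ofInjective hfree).symm⟩
end

section
/- For all integers a, d, c and every natural number j, H(T⁻¹R)ʲ = (TR⁻¹)ʲH; in particular H·Uʲ = (T U⁻¹ T⁻¹)ʲ·H, since T⁻¹R = U. -/
open Matrix

/-- The matrix `U` depending on the integers `a`, `d`, `c`. -/
def Umat (a d c : ℤ) : Matrix (Fin 6) (Fin 6) ℤ :=
  !![1,1,0,0,0,0; 0,1,1,0,0,0; 0,0,1,0,0,0; -a,-a,0,1,0,0; 0,d,d,-1,1,0; 0,0,-c,1,-1,1]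

/-- The matrix `T`: the identity with an extra `1` in position `(3,6)` (i.e. row 3, column 6). -/
def Tmat : Matrix (Fin 6) (Fin 6) ℤ :=
  !![1,0,0,0,0,0; 0,1,0,0,0,0; 0,0,1,0,0,1; 0,0,0,1,0,0; 0,0,0,0,1,0; 0,0,0,0,0,1]

/-- The involutive matrix `H` (depending on `d`). -/
def Hmat (d : ℤ) : Matrix (Fin 6) (Fin 6) ℤ :=
  !![1,1,0,0,0,0; 0,-1,0,0,0,0; 0,0,1,0,0,-1; 0,0,0,-1,0,0; 0,-d,0,-1,1,0; 0,0,0,0,0,-1]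

def Vmat (a d c : ℤ) : Matrix (Fin 6) (Fin 6) ℤ :=
  !![1,-1,1,0,0,0; 0,1,-1,0,0,0; 0,0,1,0,0,0; a,0,0,1,0,0; a,-d,0,1,1,0; 0,-d,c,0,1,1]

def Smat : Matrix (Fin 6) (Fin 6) ℤ :=
  !![1,0,0,0,0,0; 0,1,0,0,0,0; 0,0,1,0,0,-1; 0,0,0,1,0,0; 0,0,0,0,1,0; 0,0,0,0,0,1]

theorem T_mul_S : Tmat * Smat = 1 := by decide

theorem U_mul_V (a d c : ℤ) : Umat a d c * Vmat a d c = 1 := by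
  ext i j
  fin_cases i <;> fin_cases j <;>
    simp [Umat, Vmat, Matrix.mul_apply, Fin.sum_univ_succ]

set_option maxHeartbeats 4000000 in
theorem key (a d c : ℤ) :
    Hmat d * Umat a d c = Tmat * Vmat a d c * Smat * Hmat d := by
  ext i j
  fin_cases i <;> fin_cases j <;>
    simp [Umat, Vmat, Tmat, Smat, Hmat, Matrix.mul_apply, Fin.sum_univ_succ] <;> try ring

/-- For all integers `a, d, c` and every natural number `j`, with `R = T·U`:
`H (T⁻¹R)ʲ = (TR⁻¹)ʲ H`; in particular `H Uʲ = (T U⁻¹ T⁻¹)ʲ H`, since `T⁻¹R = U`. -/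
theorem H_conjugation_powers (a d c : ℤ) (j : ℕ) :
    Hmat d * (Tmat⁻¹ * (Tmat * Umat a d c)) ^ j
      = (Tmat * (Tmat * Umat a d c)⁻¹) ^ j * Hmat d ∧
    Hmat d * (Umat a d c) ^ j
      = (Tmat * (Umat a d c)⁻¹ * Tmat⁻¹) ^ j * Hmat d := by
  have hT : Tmat⁻¹ = Smat := Matrix.inv_eq_right_inv T_mul_S
  have hU : (Umat a d c)⁻¹ = Vmat a d c := Matrix.inv_eq_right_inv (U_mul_V a d c)
  have hST : Smat * Tmat = 1 := mul_eq_one_comm.mp T_mul_S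
  have h2 : Hmat d * (Umat a d c) ^ j
      = (Tmat * (Umat a d c)⁻¹ * Tmat⁻¹) ^ j * Hmat d := by
    rw [hT, hU]
    have h : SemiconjBy (Hmat d) (Umat a d c) (Tmat * Vmat a d c * Smat) := key a d c
    exact h.pow_right j
  refine ⟨?_, h2⟩
  rw [Matrix.mul_inv_rev, ← mul_assoc Tmat⁻¹, ← mul_assoc Tmat (Umat a d c)⁻¹, ← h2, hT, hST,
    one_mul]
end

section
/- For each of the seven triples (a,d,c) ∈ {(64,48,12), (48,40,11), (32,32,10), (16,29,9), (36,33,10), (24,26,9), (20,25,9)}, if m and n are integers with Rᵐ = Tⁿ, then m = n = 0; consequently the cyclic subgroups ⟨T⟩ and ⟨R⟩ of GL(6,ℤ) intersect trivially and are both infinite cyclic (in particular Rᵐ ≠ I for every nonzero integer m). -/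
open Matrix

/-- The square of `R` for the triple `(16,29,9)`. -/
def sqR : Matrix (Fin 6) (Fin 6) ℤ :=
  !![1,2,1,0,0,0; 0,1,-7,1,-1,1; -16,-45,26,-5,6,-7; -32,-48,-16,1,0,0; 16,74,-174,27,-28,29; -16,-45,34,-6,7,-8]

/-- The fourth power of `R` for the triple `(16,29,9)`. -/
def fourR : Matrix (Fin 6) (Fin 6) ℤ :=
  !![-15,-41,13,-3,4,-5; 48,149,3,4,-8,13; -64,-248,-227,24,-16,3; 192,560,-128,33,-48,64; 1024,3263,400,41,-131,248; -128,-441,-211,16,-3,-16]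

/-- If `R² v = v + w`, `R² w = w` and `w ≠ 0`, then no positive power of `R` is `1`. -/
lemma no_pow_of_jordan (R : Matrix (Fin 6) (Fin 6) ℤ) (v w : Fin 6 → ℤ)
    (hv : (R * R) *ᵥ v = v + w) (hw : (R * R) *ᵥ w = w) (i : Fin 6) (hi : w i ≠ 0)
    (k : ℕ) (hk : 0 < k) : R ^ k ≠ 1 := by
  intro h
  have key : ∀ j : ℕ, (R * R) ^ j *ᵥ v = v + (j : ℤ) • w := by
    intro j
    induction j with
    | zero => simp
    | succ j ih =>
      rw [pow_succ', ← Matrix.mulVec_mulVec, ih, Matrix.mulVec_add, hv, Matrix.mulVec_smul, hw]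
      push_cast
      rw [add_smul, one_smul]
      abel
  have h2 := key k
  have h3 : (R * R) ^ k = 1 := by
    rw [← pow_two, ← pow_mul, mul_comm, pow_mul, h, one_pow]
  rw [h3, Matrix.one_mulVec] at h2
  have h4 := congrFun h2 i
  simp only [Pi.add_apply, Pi.smul_apply, smul_eq_mul] at h4
  have h5 : (k : ℤ) * w i = 0 := by linarith
  rcases mul_eq_zero.mp h5 with h6 | h6
  · omega
  · exact hi h6

/-- A finite-order integer matrix of size six has trace at most six. -/
lemma trace_le_of_pow_eq_one (M : Matrix (Fin 6) (Fin 6) ℤ) (k : ℕ) (hk : 0 < k)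
    (h : M ^ k = 1) : M.trace ≤ 6 := by
  set N : Matrix (Fin 6) (Fin 6) ℂ := (Int.castRingHom ℂ).mapMatrix M with hN
  have hNk : N ^ k = 1 := by rw [hN, ← map_pow, h, map_one]
  have htr : N.trace = (M.trace : ℂ) := by
    simp [hN, Matrix.trace]
  have hroot : ∀ z ∈ N.charpoly.roots, ‖z‖ = 1 := by
    intro z hz
    have hz' : z ∈ spectrum ℂ N :=
      Matrix.mem_spectrum_iff_isRoot_charpoly.mpr (Polynomial.isRoot_of_mem_roots hz)
    have h1 : z ^ k ∈ spectrum ℂ (N ^ k) := spectrum.pow_mem_pow N k hz'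
    rw [hNk, spectrum.one_eq] at h1
    have h2 : ‖z‖ ^ k = 1 := by rw [← norm_pow, Set.mem_singleton_iff.mp h1, norm_one]
    exact (pow_eq_one_iff_of_nonneg (norm_nonneg z) hk.ne').mp h2
  have hsum : N.trace = N.charpoly.roots.sum := Matrix.trace_eq_sum_roots_charpoly N
  have hcard : (N.charpoly.roots.card : ℝ) ≤ 6 := by
    have h1 := Polynomial.card_roots' N.charpoly
    rw [Matrix.charpoly_natDegree_eq_dim] at h1
    simp at h1
    exact_mod_cast h1
  have hnorm : ‖N.trace‖ ≤ 6 := by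
    rw [hsum]
    refine le_trans (norm_multiset_sum_le _) (le_trans (le_of_eq ?_) hcard)
    rw [Multiset.map_congr rfl hroot]
    simp
  rw [htr, Complex.norm_intCast] at hnorm
  have h2 : ((M.trace : ℤ) : ℝ) ≤ 6 := le_trans (le_abs_self _) hnorm
  exact_mod_cast h2

lemma no_pow (a d c : ℤ)
    (h : (a, d, c) ∈
      ({(64,48,12), (48,40,11), (32,32,10), (16,29,9), (36,33,10), (24,26,9), (20,25,9)} :
        Set (ℤ × ℤ × ℤ))) (k : ℕ) (hk : 0 < k) : (Tmat * Umat a d c) ^ k ≠ 1 := by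
  simp only [Set.mem_insert_iff, Set.mem_singleton_iff, Prod.mk.injEq] at h
  rcases h with ⟨rfl, rfl, rfl⟩ | ⟨rfl, rfl, rfl⟩ | ⟨rfl, rfl, rfl⟩ | ⟨rfl, rfl, rfl⟩ |
    ⟨rfl, rfl, rfl⟩ | ⟨rfl, rfl, rfl⟩ | ⟨rfl, rfl, rfl⟩
  · exact no_pow_of_jordan _ ![1, 0, -4, 0, 32, 0] ![-4, 8, -16, 128, 256, -32]
      (by decide +kernel) (by decide +kernel) 0 (by decide) k hk
  · exact no_pow_of_jordan _ ![1, 0, -4, 0, 28, 0] ![-4, 8, -16, 96, 208, -32]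
      (by decide +kernel) (by decide +kernel) 0 (by decide) k hk
  · exact no_pow_of_jordan _ ![1, 0, -4, 0, 24, 0] ![-4, 8, -16, 64, 160, -32]
      (by decide +kernel) (by decide +kernel) 0 (by decide) k hk
  · -- here the characteristic polynomial is not a product of cyclotomics; `trace (R ^ 5) = 22`
    intro h1
    have h2 := trace_le_of_pow_eq_one ((Tmat * Umat 16 29 9) ^ 5) k hk
      (by rw [← pow_mul, mul_comm, pow_mul, h1, one_pow])
    have h3 : ((Tmat * Umat 16 29 9) ^ 5).trace = 22 := by
      have e1 : (Tmat * Umat 16 29 9) * (Tmat * Umat 16 29 9) = sqR := by decide +kernel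
      have e2 : sqR * sqR = fourR := by decide +kernel
      have e3 : (Tmat * Umat 16 29 9) ^ 5 = fourR * (Tmat * Umat 16 29 9) := by
        rw [← e2, ← e1]; simp only [pow_succ, pow_zero, one_mul, mul_assoc]
      rw [e3]
      decide +kernel
    omega
  · exact no_pow_of_jordan _ ![1, 0, -4, 0, 24, 0] ![-4, 8, -16, 72, 168, -32]
      (by decide +kernel) (by decide +kernel) 0 (by decide) k hk
  · exact no_pow_of_jordan _ ![1, 0, -4, 0, 20, 0] ![-4, 8, -16, 48, 128, -32]
      (by decide +kernel) (by decide +kernel) 0 (by decide) k hk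
  · exact no_pow_of_jordan _ ![1, 0, -4, 0, 20, 0] ![-4, 8, -16, 40, 120, -32]
      (by decide +kernel) (by decide +kernel) 0 (by decide) k hk

/-- The matrix unit `E` with `T = 1 + E`. -/
def Emat : Matrix (Fin 6) (Fin 6) ℤ :=
  !![0,0,0,0,0,0; 0,0,0,0,0,0; 0,0,0,0,0,1; 0,0,0,0,0,0; 0,0,0,0,0,0; 0,0,0,0,0,0]

lemma T_pow (k : ℕ) : Tmat ^ k = 1 + (k : ℤ) • Emat := by
  have hT : Tmat = 1 + Emat := by decide +kernel
  have hE : Emat * Emat = 0 := by decide +kernel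
  induction k with
  | zero => simp
  | succ k ih =>
    rw [pow_succ, ih, hT]
    simp only [add_mul, mul_add, one_mul, mul_one, smul_mul_assoc, hE, smul_zero, add_zero]
    push_cast
    rw [add_smul, one_smul]
    abel

lemma commute_nat (a d c : ℤ) (k : ℕ)
    (h : Commute (Tmat * Umat a d c) (Tmat ^ k)) : k = 0 := by
  have h1 := h.eq
  rw [T_pow, mul_add, add_mul, mul_one, one_mul, mul_smul_comm, smul_mul_assoc] at h1
  have h1b := add_left_cancel h1
  have h2 := congrFun (congrFun h1b 1) 5
  have e1 : (Tmat * Umat a d c * Emat) 1 5 = 1 := by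
    simp [Tmat, Umat, Emat, Matrix.mul_apply, Fin.sum_univ_succ]
  have e2 : (Emat * (Tmat * Umat a d c)) 1 5 = 0 := by
    simp [Emat, Matrix.mul_apply, Fin.sum_univ_succ]
  rw [Matrix.smul_apply, Matrix.smul_apply, e1, e2] at h2
  simpa using h2

/-- For each of the seven triples `(a,d,c)` of Table 1, realizing `U` and `T` as
elements of `GL(6,ℤ)` and setting `R = T·U`: if `Rᵐ = Tⁿ` for integers `m, n`,
then `m = n = 0`; consequently the cyclic subgroups `⟨T⟩` and `⟨R⟩` intersect
trivially and are both infinite cyclic (in particular `Rᵐ ≠ I` for every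
nonzero integer `m`). -/
theorem zpowers_T_R_trivial_intersection (a d c : ℤ)
    (h : (a, d, c) ∈
      ({(64,48,12), (48,40,11), (32,32,10), (16,29,9), (36,33,10), (24,26,9), (20,25,9)} :
        Set (ℤ × ℤ × ℤ)))
    (U T : GL (Fin 6) ℤ)
    (hU : (U : Matrix (Fin 6) (Fin 6) ℤ) = Umat a d c)
    (hT : (T : Matrix (Fin 6) (Fin 6) ℤ) = Tmat) :
    (∀ m n : ℤ, (T * U) ^ m = T ^ n → m = 0 ∧ n = 0) ∧
    Subgroup.zpowers T ⊓ Subgroup.zpowers (T * U) = ⊥ ∧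
    ¬ IsOfFinOrder T ∧ ¬ IsOfFinOrder (T * U) ∧
    ∀ m : ℤ, m ≠ 0 → (T * U) ^ m ≠ 1 := by
  have hR : ((T * U : GL (Fin 6) ℤ) : Matrix (Fin 6) (Fin 6) ℤ) = Tmat * Umat a d c := by
    rw [Units.val_mul, hT, hU]
  have hRfin : ∀ m : ℤ, m ≠ 0 → (T * U) ^ m ≠ 1 := by
    intro m hm h1
    have h2 : (T * U) ^ m.natAbs = 1 := by
      rcases Int.natAbs_eq m with h3 | h3
      · rw [h3, zpow_natCast] at h1
        exact h1
      · rw [h3, _root_.zpow_neg, zpow_natCast, inv_eq_one] at h1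
        exact h1
    have h3 := congrArg (fun x : GL (Fin 6) ℤ => (x : Matrix (Fin 6) (Fin 6) ℤ)) h2
    simp only [Units.val_pow_eq_pow_val, hR, Units.val_one] at h3
    exact no_pow a d c h _ (Int.natAbs_pos.mpr hm) h3
  have hcomm : ∀ n : ℤ, Commute (T * U) (T ^ n) → n = 0 := by
    intro n h1
    have h2 : Commute (T * U) (T ^ n.natAbs) := by
      rcases Int.natAbs_eq n with h3 | h3
      · rw [h3, zpow_natCast] at h1
        exact h1
      · rw [h3, _root_.zpow_neg, zpow_natCast] at h1
        exact Commute.inv_right_iff.mp h1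
    have h3 := congrArg (fun x : GL (Fin 6) ℤ => (x : Matrix (Fin 6) (Fin 6) ℤ)) h2.eq
    simp only [Units.val_mul (T * U), Units.val_mul (T ^ n.natAbs), Units.val_pow_eq_pow_val, hR, hT] at h3
    exact Int.natAbs_eq_zero.mp (commute_nat a d c _ h3)
  have main : ∀ m n : ℤ, (T * U) ^ m = T ^ n → m = 0 ∧ n = 0 := by
    intro m n h1
    have hn : n = 0 := hcomm n (h1 ▸ (Commute.refl (T * U)).zpow_right m)
    refine ⟨?_, hn⟩
    by_contra hm
    rw [hn, zpow_zero] at h1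
    exact hRfin m hm h1
  refine ⟨main, ?_, ?_, ?_, hRfin⟩
  · rw [eq_bot_iff]
    rintro x ⟨hx1, hx2⟩
    obtain ⟨n, rfl⟩ := Subgroup.mem_zpowers_iff.mp hx1
    obtain ⟨m, hm⟩ := Subgroup.mem_zpowers_iff.mp hx2
    rw [(main m n hm).2, zpow_zero]
    exact Subgroup.one_mem _
  · intro hf
    obtain ⟨n, hn, h1⟩ := isOfFinOrder_iff_pow_eq_one.mp hf
    have h2 := (main 0 n (by rw [zpow_zero, zpow_natCast, h1])).2
    omega
  · intro hf
    obtain ⟨n, hn, h1⟩ := isOfFinOrder_iff_pow_eq_one.mp hf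
    exact hRfin n (by omega) (by rw [zpow_natCast, h1])
end
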